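/- arXiv:1403.0057 — 8 statements merged into one kernel-verified Lean document; each statement's English description precedes it below -/
import Mathlib

section
/- Let p and p' be influence probability functions on a finite vertex type V with p u v ≤ p' u v for all u, v. Then for every seed set S ⊆ V, σ(S, p) ≤ σ(S, p'). (Monotonicity of influence spread in the influence probabilities; Lemma 2.1 of the paper.) -/
open scoped Classical

/-- Weight of a live-edge set `L` under influence probability function `p`:
the product over all ordered pairs `(u,v)` with `u ≠ v` of `p u v` if the
edge is live and `1 - p u v` otherwise. -/
noncomputable def edgeWeight {V : Type*} [Fintype V] [DecidableEq V]
    (p : V → V → ℝ) (L : Finset (V × V)) : ℝ :=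
  ∏ e ∈ (Finset.univ : Finset V).offDiag, (if e ∈ L then p e.1 e.2 else 1 - p e.1 e.2)

/-- The set of vertices reachable from some vertex of `S` via edges of the
live-edge set `L` (reflexive–transitive closure). -/
noncomputable def reachSet {V : Type*} [Fintype V] [DecidableEq V]
    (S : Finset V) (L : Finset (V × V)) : Finset V :=
  Finset.univ.filter (fun x => ∃ s ∈ S, Relation.ReflTransGen (fun a b => (a, b) ∈ L) s x)

/-- Influence spread `σ(S, p)`: the sum over all live-edge sets `L`
(subsets of the off-diagonal pairs) of `w(p,L) * |R(S,L)|`. -/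
noncomputable def infSpread {V : Type*} [Fintype V] [DecidableEq V]
    (S : Finset V) (p : V → V → ℝ) : ℝ :=
  ∑ L ∈ ((Finset.univ : Finset V).offDiag).powerset, edgeWeight p L * (reachSet S L).card

/-- Marginal influence `MI(v | S, p) = σ(S ∪ {v}, p) − σ(S, p)`. -/
noncomputable def marginInf {V : Type*} [Fintype V] [DecidableEq V]
    (v : V) (S : Finset V) (p : V → V → ℝ) : ℝ :=
  infSpread (insert v S) p - infSpread S p

/-- One-step expansion of the expectation over the states of the edge `a`. -/
theorem sum_insert_expand {α : Type*} [DecidableEq α] (q : α → ℝ) (a : α) (E : Finset α)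
    (ha : a ∉ E) (f : Finset α → ℝ) :
    ∑ L ∈ (insert a E).powerset, (∏ e ∈ insert a E, (if e ∈ L then q e else 1 - q e)) * f L
      = ∑ L ∈ E.powerset, (∏ e ∈ E, (if e ∈ L then q e else 1 - q e)) *
          ((1 - q a) * f L + q a * f (insert a L)) := by
  rw [Finset.sum_powerset_insert ha, ← Finset.sum_add_distrib]
  refine Finset.sum_congr rfl fun L hL => ?_
  have haL : a ∉ L := fun h => ha (Finset.mem_powerset.1 hL h)
  rw [Finset.prod_insert ha, Finset.prod_insert ha, if_neg haL,
    if_pos (Finset.mem_insert_self a L)]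
  have h : ∏ e ∈ E, (if e ∈ insert a L then q e else 1 - q e)
      = ∏ e ∈ E, (if e ∈ L then q e else 1 - q e) := by
    refine Finset.prod_congr rfl fun e he => ?_
    have hne : e ≠ a := fun h => ha (h ▸ he)
    simp [Finset.mem_insert, hne]
  rw [h]
  ring

/-- Expectations of monotone set functions are monotone in the probabilities. -/
theorem sum_mono_in_prob {α : Type*} [DecidableEq α] (q q' : α → ℝ)
    (h0 : ∀ e, 0 ≤ q e) (hle : ∀ e, q e ≤ q' e) (h1 : ∀ e, q' e ≤ 1) (E : Finset α) :
    ∀ f : Finset α → ℝ, Monotone f →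
    ∑ L ∈ E.powerset, (∏ e ∈ E, (if e ∈ L then q e else 1 - q e)) * f L
      ≤ ∑ L ∈ E.powerset, (∏ e ∈ E, (if e ∈ L then q' e else 1 - q' e)) * f L := by
  induction E using Finset.induction_on with
  | empty => intro f _; simp
  | insert a E ha ih =>
    intro f hf
    rw [sum_insert_expand q a E ha, sum_insert_expand q' a E ha]
    refine (ih (fun L => (1 - q a) * f L + q a * f (insert a L)) ?_).trans ?_
    · intro L M hLM
      have e1 := hf hLM
      have e2 := hf (Finset.insert_subset_insert a hLM)
      have e3 := mul_le_mul_of_nonneg_left e1 (sub_nonneg.2 ((hle a).trans (h1 a)))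
      have e4 := mul_le_mul_of_nonneg_left e2 (h0 a)
      exact add_le_add e3 e4
    · refine Finset.sum_le_sum fun L _ => mul_le_mul_of_nonneg_left ?_ ?_
      · have e1 := hf (Finset.subset_insert a L)
        nlinarith [mul_nonneg (sub_nonneg.2 (hle a)) (sub_nonneg.2 e1)]
      · refine Finset.prod_nonneg fun e _ => ?_
        split_ifs
        · exact (h0 e).trans (hle e)
        · exact sub_nonneg.2 (h1 e)

/-- Lemma 2.1: influence spread is monotone in the influence probabilities. -/
theorem infSpread_mono_in_prob {V : Type*} [Fintype V] [DecidableEq V]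
    (p p' : V → V → ℝ)
    (hp1 : ∀ u v, 0 ≤ p u v ∧ p u v ≤ 1) (hp2 : ∀ v, p v v = 0)
    (hp1' : ∀ u v, 0 ≤ p' u v ∧ p' u v ≤ 1) (hp2' : ∀ v, p' v v = 0)
    (hle : ∀ u v, p u v ≤ p' u v) :
    ∀ S : Finset V, infSpread S p ≤ infSpread S p' := by
  intro S
  refine sum_mono_in_prob (fun e : V × V => p e.1 e.2) (fun e => p' e.1 e.2)
    (fun e => (hp1 _ _).1) (fun e => hle _ _) (fun e => (hp1' _ _).2) _
    (fun L => ((reachSet S L).card : ℝ)) ?_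
  intro L M hLM
  refine Nat.cast_le.2 (Finset.card_le_card fun x hx => ?_)
  simp only [reachSet, Finset.mem_filter, Finset.mem_univ, true_and] at hx ⊢
  obtain ⟨s, hs, hr⟩ := hx
  exact ⟨s, hs, Relation.ReflTransGen.mono (fun a b hab => hLM hab) _ _ hr⟩
end

section
/- Let p be an influence probability function on a finite vertex type V. Then σ(S, p) is submodular in the seed set: for all S ⊆ T ⊆ V and every v ∈ V, σ(S ∪ {v}, p) − σ(S, p) ≥ σ(T ∪ {v}, p) − σ(T, p). -/
open scoped Classical

/-- The cardinality inequality for a fixed live-edge set. -/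
theorem reachSet_card_submodular {V : Type*} [Fintype V] [DecidableEq V]
    (S T : Finset V) (hST : S ⊆ T) (v : V) (L : Finset (V × V)) :
    (reachSet (insert v T) L).card + (reachSet S L).card ≤
      (reachSet (insert v S) L).card + (reachSet T L).card := by
  have hins : ∀ U : Finset V, reachSet (insert v U) L = reachSet {v} L ∪ reachSet U L := by
    intro U
    ext x
    simp [reachSet]
  have hmono : reachSet S L ⊆ reachSet T L := by
    intro x hx
    simp only [reachSet, Finset.mem_filter, Finset.mem_univ, true_and] at hx ⊢
    obtain ⟨s, hs, h⟩ := hx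
    exact ⟨s, hST hs, h⟩
  rw [hins, hins]
  have h1 := Finset.card_union_add_card_inter (reachSet {v} L) (reachSet T L)
  have h2 := Finset.card_union_add_card_inter (reachSet {v} L) (reachSet S L)
  have h3 := Finset.card_le_card
    (Finset.inter_subset_inter (Finset.Subset.refl (reachSet {v} L)) hmono)
  omega

theorem edgeWeight_nonneg_of {V : Type*} [Fintype V] [DecidableEq V]
    (p : V → V → ℝ) (hp1 : ∀ u v, 0 ≤ p u v ∧ p u v ≤ 1) (L : Finset (V × V)) :
    0 ≤ edgeWeight p L := by
  refine Finset.prod_nonneg fun e _ => ?_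
  have := hp1 e.1 e.2
  split_ifs <;> linarith

/-- Influence spread is submodular in the seed set. -/
theorem infSpread_submodular {V : Type*} [Fintype V] [DecidableEq V]
    (p : V → V → ℝ)
    (hp1 : ∀ u v, 0 ≤ p u v ∧ p u v ≤ 1) (hp2 : ∀ v, p v v = 0) :
    ∀ S T : Finset V, S ⊆ T → ∀ v : V,
      infSpread (insert v T) p - infSpread T p ≤
        infSpread (insert v S) p - infSpread S p := by
  intro S T hST v
  unfold infSpread
  rw [← Finset.sum_sub_distrib, ← Finset.sum_sub_distrib]
  refine Finset.sum_le_sum fun L _ => ?_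
  rw [← mul_sub, ← mul_sub]
  refine mul_le_mul_of_nonneg_left ?_ (edgeWeight_nonneg_of p hp1 L)
  have h : ((reachSet (insert v T) L).card : ℝ) + (reachSet S L).card ≤
      (reachSet (insert v S) L).card + (reachSet T L).card := by
    exact_mod_cast reachSet_card_submodular S T hST v L
  linarith
end

section
/- Let V_1, …, V_d be pairwise disjoint sets of vertices whose union is V, and let p be an influence probability function with p u v = 0 unless u and v lie in the same part V_j. Then the influence spread decomposes across parts: for every S ⊆ V, σ(S, p) = Σ_{j=1}^{d} σ(S ∩ V_j, p). (Claim (c) in the proof of Lemma 4.1 of the paper.) -/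
open scoped Classical

/-- If the influence probability function respects a partition of the vertices,
then the influence spread decomposes across the parts. -/
theorem infSpread_partition {V : Type*} [Fintype V] [DecidableEq V] {d : ℕ}
    (parts : Fin d → Finset V)
    (hdisj : ∀ i j, i ≠ j → Disjoint (parts i) (parts j))
    (hcover : ∀ x : V, ∃ i, x ∈ parts i)
    (p : V → V → ℝ)
    (hp1 : ∀ u v, 0 ≤ p u v ∧ p u v ≤ 1) (hp2 : ∀ v, p v v = 0)
    (hsep : ∀ u v, p u v ≠ 0 → ∃ j, u ∈ parts j ∧ v ∈ parts j) :
    ∀ S : Finset V, infSpread S p = ∑ j, infSpread (S ∩ parts j) p := by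
  intro S
  unfold infSpread
  rw [Finset.sum_comm]
  refine Finset.sum_congr rfl fun L hL => ?_
  rw [← Finset.mul_sum]
  by_cases hw : edgeWeight p L = 0
  · simp [hw]
  congr 1
  -- every live edge stays inside one part
  have hedge : ∀ a b, (a, b) ∈ L → ∃ j, a ∈ parts j ∧ b ∈ parts j := by
    intro a b hab
    apply hsep
    have hmem := Finset.mem_powerset.1 hL hab
    have h := Finset.prod_ne_zero_iff.1 hw (a, b) hmem
    simpa [hab] using h
  have huniq : ∀ i j x, x ∈ parts i → x ∈ parts j → i = j := by
    intro i j x hi hj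
    by_contra hne
    exact Finset.disjoint_left.1 (hdisj i j hne) hi hj
  have hreach : ∀ s x, Relation.ReflTransGen (fun a b => (a, b) ∈ L) s x →
      ∀ j, s ∈ parts j → x ∈ parts j := by
    intro s x h j hs
    induction h with
    | refl => exact hs
    | tail _ hbc ih =>
      obtain ⟨k, hk1, hk2⟩ := hedge _ _ hbc
      rw [huniq _ _ _ ih hk1]
      exact hk2
  have hunion : reachSet S L = Finset.univ.biUnion (fun j => reachSet (S ∩ parts j) L) := by
    ext x
    simp only [reachSet, Finset.mem_filter, Finset.mem_univ, true_and, Finset.mem_biUnion,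
      Finset.mem_inter]
    constructor
    · rintro ⟨s, hs, h⟩
      obtain ⟨j, hj⟩ := hcover s
      exact ⟨j, s, ⟨hs, hj⟩, h⟩
    · rintro ⟨j, s, ⟨hs, _⟩, h⟩
      exact ⟨s, hs, h⟩
  rw [hunion, Finset.card_biUnion]
  · push_cast
    rfl
  · intro i _ j _ hij
    rw [Function.onFun, Finset.disjoint_left]
    intro x hxi hxj
    simp only [reachSet, Finset.mem_filter, Finset.mem_univ, true_and,
      Finset.mem_inter] at hxi hxj
    obtain ⟨s, ⟨_, hs⟩, h⟩ := hxi
    obtain ⟨t, ⟨_, ht⟩, h2⟩ := hxj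
    exact hij (huniq _ _ _ (hreach _ _ h _ hs) (hreach _ _ h2 _ ht))
end

section
/- (Lemma 4.1.) Let V_1, …, V_d be pairwise disjoint sets covering V and let p_1, …, p_d be fully separable topic influence probability functions with respect to this partition. Let λ_1, …, λ_d ∈ [0,1] and p = Σ_{j=1}^{d} λ_j p_j (pointwise). Then for every topic i, every v ∈ V_i, and every S ⊆ V: MI(v | S, λ_i p_i) = MI(v | S, p), i.e., σ(S ∪ {v}, λ_i p_i) − σ(S, λ_i p_i) = σ(S ∪ {v}, p) − σ(S, p). -/
open scoped Classical

theorem sum_factor_aux {α : Type*} [DecidableEq α] (f : α → ℝ) (h : Finset α → ℝ)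
    (A B : Finset α) (hAB : Disjoint A B) (hh : ∀ b ∈ B, ∀ L, h (insert b L) = h L) :
    ∑ L ∈ (A ∪ B).powerset, (∏ e ∈ A ∪ B, (if e ∈ L then f e else 1 - f e)) * h L
      = ∑ L ∈ A.powerset, (∏ e ∈ A, (if e ∈ L then f e else 1 - f e)) * h L := by
  induction B using Finset.induction_on with
  | empty => simp
  | insert b B hb ih =>
    have hbA : b ∉ A := fun hA =>
      (Finset.disjoint_left.mp hAB hA) (Finset.mem_insert_self b B)
    have hbT : b ∉ A ∪ B := by simp [hb, hbA]
    rw [← ih (hAB.mono_right (Finset.subset_insert b B))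
      (fun c hc => hh c (Finset.mem_insert_of_mem hc))]
    rw [Finset.union_insert, Finset.sum_powerset_insert hbT, ← Finset.sum_add_distrib]
    refine Finset.sum_congr rfl fun L hL => ?_
    have hbL : b ∉ L := fun hx => hbT (Finset.mem_powerset.mp hL hx)
    rw [Finset.prod_insert hbT, Finset.prod_insert hbT, hh b (Finset.mem_insert_self b B)]
    have e : ∏ x ∈ A ∪ B, (if x ∈ insert b L then f x else 1 - f x)
        = ∏ x ∈ A ∪ B, (if x ∈ L then f x else 1 - f x) := by
      refine Finset.prod_congr rfl fun x hx => ?_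
      have hxb : x ≠ b := fun hxb => hbT (hxb ▸ hx)
      simp [Finset.mem_insert, hxb]
    rw [e]
    simp only [hbL, Finset.mem_insert_self, if_true, if_false]
    ring

/-- Gain from adding `v` to `S` under live-edge set `L`. -/
noncomputable def gain {V : Type*} [Fintype V] [DecidableEq V]
    (v : V) (S : Finset V) (L : Finset (V × V)) : ℝ :=
  ((reachSet {v} L \ reachSet S L).card : ℝ)

theorem reach_insert_aux {V : Type*} [Fintype V] [DecidableEq V]
    (v : V) (S : Finset V) (L : Finset (V × V)) :
    ((reachSet (insert v S) L).card : ℝ) = (reachSet S L).card + gain v S L := by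
  have : reachSet (insert v S) L = reachSet S L ∪ (reachSet {v} L \ reachSet S L) := by
    rw [Finset.union_sdiff_self_eq_union]
    ext x
    simp only [reachSet, Finset.mem_union, Finset.mem_filter, Finset.mem_univ, true_and,
      Finset.exists_mem_insert, Finset.mem_singleton, exists_eq_left]
    exact or_comm
  rw [this, Finset.card_union_of_disjoint Finset.disjoint_sdiff, gain]
  push_cast
  rfl

theorem gain_inter_aux {V : Type*} [Fintype V] [DecidableEq V]
    (P : Finset V) (v : V) (hv : v ∈ P) (S : Finset V) (L A : Finset (V × V))
    (hA : ∀ a b, (a, b) ∈ L → a ∈ P → b ∈ P → (a, b) ∈ A)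
    (hL : ∀ a b, (a, b) ∈ L → (a ∈ P ↔ b ∈ P)) :
    gain v S L = gain v S (L ∩ A) := by
  have mono : ∀ s x, Relation.ReflTransGen (fun a b => (a, b) ∈ L ∩ A) s x →
      Relation.ReflTransGen (fun a b => (a, b) ∈ L) s x := fun s x h =>
    Relation.ReflTransGen.mono (fun a b hab => (Finset.mem_inter.mp hab).1) s x h
  have stay : ∀ s x, Relation.ReflTransGen (fun a b => (a, b) ∈ L) s x → (s ∈ P ↔ x ∈ P) := by
    intro s x h
    induction h with
    | refl => rfl
    | tail _ hbc ih => exact ih.trans (hL _ _ hbc)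
  have key : ∀ s x, s ∈ P → Relation.ReflTransGen (fun a b => (a, b) ∈ L) s x →
      Relation.ReflTransGen (fun a b => (a, b) ∈ L ∩ A) s x := by
    intro s x hs h
    induction h with
    | refl => exact .refl
    | tail hab hbc ih =>
      have hb := (stay _ _ hab).mp hs
      exact ih.tail (Finset.mem_inter.mpr ⟨hbc, hA _ _ hbc hb ((hL _ _ hbc).mp hb)⟩)
  have : reachSet {v} L \ reachSet S L = reachSet {v} (L ∩ A) \ reachSet S (L ∩ A) := by
    ext x
    simp only [reachSet, Finset.mem_sdiff, Finset.mem_filter, Finset.mem_univ, true_and,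
      Finset.mem_singleton, exists_eq_left]
    constructor
    · rintro ⟨h1, h2⟩
      exact ⟨key _ _ hv h1, fun ⟨s, hs, h⟩ => h2 ⟨s, hs, mono _ _ h⟩⟩
    · rintro ⟨h1, h2⟩
      have h1' := mono _ _ h1
      refine ⟨h1', fun ⟨s, hs, h⟩ => h2 ⟨s, hs, key _ _ ?_ h⟩⟩
      exact (stay _ _ h).mpr ((stay _ _ h1').mp hv)
  rw [gain, gain, this]

theorem marginInf_local_aux {V : Type*} [Fintype V] [DecidableEq V]
    (P : Finset V) (v : V) (hv : v ∈ P) (S : Finset V) (q : V → V → ℝ)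
    (hq : ∀ a b, q a b ≠ 0 → (a ∈ P ↔ b ∈ P)) :
    marginInf v S q = ∑ L ∈ P.offDiag.powerset,
      (∏ e ∈ P.offDiag, (if e ∈ L then q e.1 e.2 else 1 - q e.1 e.2)) *
        gain v S (L ∩ P.offDiag) := by
  have hsub : P.offDiag ⊆ (Finset.univ : Finset V).offDiag :=
    Finset.offDiag_mono (Finset.subset_univ P)
  have hf := sum_factor_aux (fun e : V × V => q e.1 e.2) (fun L => gain v S (L ∩ P.offDiag))
    P.offDiag ((Finset.univ : Finset V).offDiag \ P.offDiag) Finset.disjoint_sdiff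
    (fun b hb L => by
      rw [Finset.insert_inter_of_notMem (Finset.mem_sdiff.mp hb).2])
  rw [Finset.union_sdiff_of_subset hsub] at hf
  rw [← hf, marginInf, infSpread, infSpread, ← Finset.sum_sub_distrib]
  refine Finset.sum_congr rfl fun L hL => ?_
  rw [reach_insert_aux, ← mul_sub, add_sub_cancel_left]
  change edgeWeight q L * _ = edgeWeight q L * _
  by_cases h0 : edgeWeight q L = 0
  · rw [h0, zero_mul, zero_mul]
  · congr 1
    have hLs := Finset.mem_powerset.mp hL
    apply gain_inter_aux P v hv
    · intro a b hab ha hb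
      exact Finset.mem_offDiag.mpr ⟨ha, hb, (Finset.mem_offDiag.mp (hLs hab)).2.2⟩
    · intro a b hab
      apply hq
      have := Finset.prod_ne_zero_iff.mp h0 (a, b) (hLs hab)
      simpa [hab] using this

/-- Lemma 4.1: in a fully separable network, the marginal influence of a node in
its own topic equals its marginal influence in the mixture. -/
theorem marginInf_separable {V : Type*} [Fintype V] [DecidableEq V] {d : ℕ}
    (parts : Fin d → Finset V)
    (hdisj : ∀ i j, i ≠ j → Disjoint (parts i) (parts j))
    (hcover : ∀ x : V, ∃ i, x ∈ parts i)
    (pt : Fin d → V → V → ℝ)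
    (hpt1 : ∀ i u v, 0 ≤ pt i u v ∧ pt i u v ≤ 1) (hpt2 : ∀ i v, pt i v v = 0)
    (hsep : ∀ i u v, pt i u v ≠ 0 → u ∈ parts i ∧ v ∈ parts i)
    (lam : Fin d → ℝ) (hlam : ∀ i, 0 ≤ lam i ∧ lam i ≤ 1)
    (p : V → V → ℝ) (hpdef : ∀ u w, p u w = ∑ j, lam j * pt j u w) :
    ∀ i : Fin d, ∀ v ∈ parts i, ∀ S : Finset V,
      marginInf v S (fun u w => lam i * pt i u w) = marginInf v S p := by
  intro i v hv S
  have uniq : ∀ j k x, x ∈ parts j → x ∈ parts k → j = k := fun j k x hj hk => by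
    by_contra hne
    exact Finset.disjoint_left.mp (hdisj j k hne) hj hk
  have hj : ∀ j a b, pt j a b ≠ 0 → (a ∈ parts i ↔ b ∈ parts i) := by
    intro j a b h
    obtain ⟨ha, hb⟩ := hsep j a b h
    constructor
    · intro h'
      rwa [uniq i j a h' ha]
    · intro h'
      rwa [uniq i j b h' hb]
  rw [marginInf_local_aux (parts i) v hv S _ (fun a b h => hj i a b (right_ne_zero_of_mul h)),
    marginInf_local_aux (parts i) v hv S p]
  · refine Finset.sum_congr rfl fun L _ => ?_
    congr 1
    refine Finset.prod_congr rfl fun e he => ?_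
    have : p e.1 e.2 = lam i * pt i e.1 e.2 := by
      rw [hpdef]
      refine Finset.sum_eq_single i (fun j _ hji => ?_) (by simp)
      by_contra hne
      have h1 := (hsep j _ _ (right_ne_zero_of_mul hne)).1
      exact hji (uniq j i _ h1 (Finset.mem_offDiag.mp he).1)
    rw [this]
  · intro a b h
    rw [hpdef] at h
    obtain ⟨j, _, hjn⟩ := Finset.exists_ne_zero_of_sum_ne_zero h
    exact hj j a b (right_ne_zero_of_mul hjn)
end

section
/- Let V_1, …, V_d be pairwise disjoint sets covering V and let p_1, …, p_d be fully separable topic influence probability functions with respect to this partition. Let λ_1, …, λ_d ∈ [0,1] and p = Σ_{j=1}^{d} λ_j p_j (pointwise). Then the marginal influence of a node localizes to its own part: for every topic i, every v ∈ V_i, and every S ⊆ V, MI(v | S, p) = MI(v | S ∩ V_i, λ_i p_i). -/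
open scoped Classical

theorem aux_marginalize {α : Type*} [DecidableEq α] (q : α → ℝ) (B : Finset α)
    (g : Finset α → ℝ) (C : Finset α) (hBC : Disjoint B C) :
    ∑ L ∈ (B ∪ C).powerset, (∏ e ∈ B ∪ C, (if e ∈ L then q e else 1 - q e)) * g (L ∩ B)
      = ∑ L ∈ B.powerset, (∏ e ∈ B, (if e ∈ L then q e else 1 - q e)) * g L := by
  induction C using Finset.induction_on with
  | empty =>
    rw [Finset.union_empty]
    refine Finset.sum_congr rfl fun L hL => ?_
    rw [Finset.inter_eq_left.2 (Finset.mem_powerset.1 hL)]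
  | insert a C ha ih =>
    rw [Finset.disjoint_insert_right] at hBC
    have haBC : a ∉ B ∪ C := by simp [ha, hBC.1]
    rw [← ih hBC.2, Finset.union_insert, Finset.sum_powerset_insert haBC,
      ← Finset.sum_add_distrib]
    refine Finset.sum_congr rfl fun L hL => ?_
    have haL : a ∉ L := fun h => haBC (Finset.mem_powerset.1 hL h)
    rw [Finset.prod_insert haBC, Finset.prod_insert haBC, Finset.insert_inter_of_notMem hBC.1,
      if_neg haL, if_pos (Finset.mem_insert_self a L)]
    have : ∏ e ∈ B ∪ C, (if e ∈ insert a L then q e else 1 - q e)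
        = ∏ e ∈ B ∪ C, (if e ∈ L then q e else 1 - q e) := by
      refine Finset.prod_congr rfl fun e he => ?_
      have hne : e ≠ a := fun h => haBC (h ▸ he)
      simp [Finset.mem_insert, hne]
    rw [this]
    ring

theorem aux_path {V : Type*} [Fintype V] [DecidableEq V] (A : Finset V) (L : Finset (V × V))
    (hL : L ⊆ (Finset.univ : Finset V).offDiag)
    (hc : ∀ a b, (a, b) ∈ L → (a ∈ A ↔ b ∈ A)) (s x : V)
    (h : Relation.ReflTransGen (fun a b => (a, b) ∈ L) s x) :
    (s ∈ A ↔ x ∈ A) ∧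
      (s ∈ A → Relation.ReflTransGen (fun a b => (a, b) ∈ L ∩ A.offDiag) s x) := by
  induction h with
  | refl => exact ⟨Iff.rfl, fun _ => Relation.ReflTransGen.refl⟩
  | tail _ hbc ih =>
    refine ⟨ih.1.trans (hc _ _ hbc), fun hs => (ih.2 hs).tail ?_⟩
    have h1 := hL hbc
    simp only [Finset.mem_offDiag, Finset.mem_univ, true_and] at h1
    have h2 := ih.1.1 hs
    exact Finset.mem_inter.2 ⟨hbc, Finset.mem_offDiag.2 ⟨h2, (hc _ _ hbc).1 h2, h1⟩⟩

theorem aux_reach_mono {V : Type*} [Fintype V] [DecidableEq V] (v : V) (S : Finset V)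
    (L : Finset (V × V)) : reachSet S L ⊆ reachSet (insert v S) L := by
  intro x hx
  simp only [reachSet, Finset.mem_filter, Finset.mem_univ, true_and] at hx ⊢
  obtain ⟨s, hs, h⟩ := hx
  exact ⟨s, Finset.mem_insert_of_mem hs, h⟩

theorem aux_reach_in {V : Type*} [Fintype V] [DecidableEq V] (A : Finset V) (L : Finset (V × V))
    (hL : L ⊆ (Finset.univ : Finset V).offDiag)
    (hc : ∀ a b, (a, b) ∈ L → (a ∈ A ↔ b ∈ A)) (S : Finset V) :
    reachSet S L ∩ A = reachSet (S ∩ A) (L ∩ A.offDiag) := by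
  ext x
  simp only [reachSet, Finset.mem_inter, Finset.mem_filter, Finset.mem_univ, true_and]
  constructor
  · rintro ⟨⟨s, hs, h⟩, hx⟩
    have := aux_path A L hL hc s x h
    have hsA := this.1.2 hx
    exact ⟨s, ⟨hs, hsA⟩, by simpa only [Finset.mem_inter] using this.2 hsA⟩
  · rintro ⟨s, ⟨hs, hsA⟩, h⟩
    have h' : Relation.ReflTransGen (fun a b => (a, b) ∈ L) s x :=
      Relation.ReflTransGen.mono (fun a b hab => hab.1) _ _ h
    exact ⟨⟨s, hs, h'⟩, (aux_path A L hL hc s x h').1.1 hsA⟩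

theorem aux_card {V : Type*} [Fintype V] [DecidableEq V] (A : Finset V) (L : Finset (V × V))
    (hL : L ⊆ (Finset.univ : Finset V).offDiag)
    (hc : ∀ a b, (a, b) ∈ L → (a ∈ A ↔ b ∈ A)) (S : Finset V) (v : V) (hv : v ∈ A) :
    ((reachSet (insert v S) L).card : ℝ) - (reachSet S L).card
      = ((reachSet (insert v (S ∩ A)) (L ∩ A.offDiag)).card : ℝ)
        - (reachSet (S ∩ A) (L ∩ A.offDiag)).card := by
  have e1 := aux_reach_in A L hL hc S
  have e2 := aux_reach_in A L hL hc (insert v S)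
  rw [Finset.insert_inter_of_mem hv] at e2
  rw [← e1, ← e2]
  have e3 : reachSet (insert v S) L \ A = reachSet S L \ A := by
    apply Finset.Subset.antisymm
    · intro x hx
      rw [Finset.mem_sdiff] at hx ⊢
      refine ⟨?_, hx.2⟩
      have hx1 := hx.1
      simp only [reachSet, Finset.mem_filter, Finset.mem_univ, true_and] at hx1 ⊢
      obtain ⟨s, hs, h⟩ := hx1
      rcases Finset.mem_insert.1 hs with rfl | hs
      · exact absurd ((aux_path A L hL hc s x h).1.1 hv) hx.2
      · exact ⟨s, hs, h⟩
    · exact Finset.sdiff_subset_sdiff (aux_reach_mono v S L) (Finset.Subset.refl _)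
  have c1 := Finset.card_inter_add_card_sdiff (reachSet (insert v S) L) A
  have c2 := Finset.card_inter_add_card_sdiff (reachSet S L) A
  rw [e3] at c1
  rw [← c1, ← c2]
  push_cast
  ring

theorem aux_local {V : Type*} [Fintype V] [DecidableEq V] (A : Finset V) (q : V → V → ℝ)
    (hq : ∀ a b, q a b ≠ 0 → (a ∈ A ↔ b ∈ A)) (S : Finset V) (v : V) (hv : v ∈ A) :
    marginInf v S q = ∑ M ∈ A.offDiag.powerset,
      (∏ e ∈ A.offDiag, (if e ∈ M then q e.1 e.2 else 1 - q e.1 e.2)) *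
        (((reachSet (insert v (S ∩ A)) M).card : ℝ) - (reachSet (S ∩ A) M).card) := by
  have hE : (Finset.univ : Finset V).offDiag
      = A.offDiag ∪ ((Finset.univ : Finset V).offDiag \ A.offDiag) :=
    (Finset.union_sdiff_of_subset (Finset.offDiag_mono (Finset.subset_univ A))).symm
  have key := aux_marginalize (fun e : V × V => q e.1 e.2) A.offDiag
    (fun M => ((reachSet (insert v (S ∩ A)) M).card : ℝ) - (reachSet (S ∩ A) M).card)
    ((Finset.univ : Finset V).offDiag \ A.offDiag) Finset.disjoint_sdiff
  rw [← hE] at key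
  rw [← key]
  unfold marginInf infSpread
  rw [← Finset.sum_sub_distrib]
  refine Finset.sum_congr rfl fun L hL => ?_
  rw [← mul_sub]
  have hL' := Finset.mem_powerset.1 hL
  change edgeWeight q L * _ = edgeWeight q L * _
  by_cases hw : edgeWeight q L = 0
  · rw [hw, zero_mul, zero_mul]
  · congr 1
    refine aux_card A L hL' (fun a b hab => hq a b fun h0 => hw ?_) S v hv
    exact Finset.prod_eq_zero (hL' hab) (by simp [hab, h0])

/-- In a fully separable network, the marginal influence of a node localizes to
its own part. -/
theorem marginInf_localizes {V : Type*} [Fintype V] [DecidableEq V] {d : ℕ}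
    (parts : Fin d → Finset V)
    (hdisj : ∀ i j, i ≠ j → Disjoint (parts i) (parts j))
    (hcover : ∀ x : V, ∃ i, x ∈ parts i)
    (pt : Fin d → V → V → ℝ)
    (hpt1 : ∀ i u v, 0 ≤ pt i u v ∧ pt i u v ≤ 1) (hpt2 : ∀ i v, pt i v v = 0)
    (hsep : ∀ i u v, pt i u v ≠ 0 → u ∈ parts i ∧ v ∈ parts i)
    (lam : Fin d → ℝ) (hlam : ∀ i, 0 ≤ lam i ∧ lam i ≤ 1)
    (p : V → V → ℝ) (hpdef : ∀ u w, p u w = ∑ j, lam j * pt j u w) :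
    ∀ i : Fin d, ∀ v ∈ parts i, ∀ S : Finset V,
      marginInf v S p = marginInf v (S ∩ parts i) (fun u w => lam i * pt i u w) := by
  intro i v hv S
  have hz : ∀ j u w, u ∈ parts i → j ≠ i → pt j u w = 0 := by
    intro j u w hu hj
    by_contra h
    exact Finset.disjoint_left.1 (hdisj j i hj) (hsep j u w h).1 hu
  have hmem : ∀ j a b, pt j a b ≠ 0 → (a ∈ parts i ↔ b ∈ parts i) := by
    intro j a b h
    obtain ⟨ha, hb⟩ := hsep j a b h
    by_cases hj : j = i
    · subst hj; exact ⟨fun _ => hb, fun _ => ha⟩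
    · have hd := Finset.disjoint_left.1 (hdisj j i hj)
      exact ⟨fun h => absurd h (hd ha), fun h => absurd h (hd hb)⟩
  rw [aux_local (parts i) p ?_ S v hv, aux_local (parts i) _ ?_ (S ∩ parts i) v hv]
  · rw [Finset.inter_assoc, Finset.inter_self]
    refine Finset.sum_congr rfl fun M _ => ?_
    congr 1
    refine Finset.prod_congr rfl fun e he => ?_
    have hpe : p e.1 e.2 = lam i * pt i e.1 e.2 := by
      rw [hpdef]
      refine Finset.sum_eq_single i (fun j _ hj => ?_) (by simp)
      rw [hz j _ _ (Finset.mem_offDiag.1 he).1 hj, mul_zero]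
    rw [hpe]
  · intro a b h
    exact hmem i a b (right_ne_zero_of_mul h)
  · intro a b h
    rw [hpdef] at h
    obtain ⟨j, _, hj⟩ := Finset.exists_ne_zero_of_sum_ne_zero h
    exact hmem j a b (right_ne_zero_of_mul hj)
end

section
/- Let V_1, …, V_d be pairwise disjoint sets covering V and let p_1, …, p_d be fully separable topic influence probability functions with respect to this partition. Let λ_1, …, λ_d ∈ [0,1] with Σ_j λ_j = 1, let D⁺ = {i : λ_i > 0}, and let p = Σ_{j=1}^{d} λ_j p_j (pointwise). Then the influence spread is 1-sub-additive: for every S ⊆ V, σ(S, p) ≤ Σ_{i ∈ D⁺} σ(S, λ_i p_i). -/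
open scoped Classical

theorem marg_aux {α : Type*} [DecidableEq α] (p : α → ℝ) (f : Finset α → ℝ) (E : Finset α)
    (D : Finset α) : Disjoint D E →
    ∑ L ∈ (D ∪ E).powerset, (∏ e ∈ D ∪ E, (if e ∈ L then p e else 1 - p e)) * f (L ∩ E)
      = ∑ L ∈ E.powerset, (∏ e ∈ E, (if e ∈ L then p e else 1 - p e)) * f L := by
  induction D using Finset.induction_on with
  | empty =>
    intro _
    rw [Finset.empty_union]
    refine Finset.sum_congr rfl fun L hL => ?_
    rw [Finset.inter_eq_left.2 (Finset.mem_powerset.1 hL)]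
  | insert a D ha ih =>
    intro hd
    rw [Finset.disjoint_insert_left] at hd
    have haT : a ∉ D ∪ E := by simp [ha, hd.1]
    rw [← ih hd.2, Finset.insert_union, Finset.sum_powerset_insert haT, ← Finset.sum_add_distrib]
    refine Finset.sum_congr rfl fun L hL => ?_
    have haL : a ∉ L := fun h => haT (Finset.mem_powerset.1 hL h)
    rw [Finset.prod_insert haT, Finset.prod_insert haT, Finset.insert_inter_of_notMem hd.1]
    have : ∏ e ∈ D ∪ E, (if e ∈ insert a L then p e else 1 - p e)
        = ∏ e ∈ D ∪ E, (if e ∈ L then p e else 1 - p e) := by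
      refine Finset.prod_congr rfl fun e he => ?_
      have : e ≠ a := fun h => haT (h ▸ he)
      simp [this]
    rw [this]
    simp only [haL, if_false, Finset.mem_insert_self, if_true]
    ring

theorem edgeWeight_zero {V : Type*} [Fintype V] [DecidableEq V]
    (p : V → V → ℝ) (L : Finset (V × V)) (e : V × V) (he : e ∈ L)
    (he' : e ∈ (Finset.univ : Finset V).offDiag) (h0 : p e.1 e.2 = 0) : edgeWeight p L = 0 := by
  unfold edgeWeight
  exact Finset.prod_eq_zero he' (by simp [he, h0])

theorem marg {V : Type*} [Fintype V] [DecidableEq V]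
    (p q : V → V → ℝ) (E : Finset (V × V)) (hE : E ⊆ (Finset.univ : Finset V).offDiag)
    (h1 : ∀ e ∈ E, p e.1 e.2 = q e.1 e.2) (h0 : ∀ e, e ∉ E → q e.1 e.2 = 0)
    (f : Finset (V × V) → ℝ) :
    ∑ L ∈ ((Finset.univ : Finset V).offDiag).powerset, edgeWeight p L * f (L ∩ E)
      = ∑ L ∈ ((Finset.univ : Finset V).offDiag).powerset, edgeWeight q L * f L := by
  have key : ∀ r : V → V → ℝ,
      ∑ L ∈ ((Finset.univ : Finset V).offDiag).powerset, edgeWeight r L * f (L ∩ E)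
      = ∑ L ∈ E.powerset, (∏ e ∈ E, (if e ∈ L then r e.1 e.2 else 1 - r e.1 e.2)) * f L := by
    intro r
    have := marg_aux (fun e : V × V => r e.1 e.2) f E
      ((Finset.univ : Finset V).offDiag \ E) Finset.sdiff_disjoint
    rw [Finset.sdiff_union_of_subset hE] at this
    exact this
  have h2 : ∑ L ∈ ((Finset.univ : Finset V).offDiag).powerset, edgeWeight q L * f L
      = ∑ L ∈ ((Finset.univ : Finset V).offDiag).powerset, edgeWeight q L * f (L ∩ E) := by
    refine Finset.sum_congr rfl fun L hL => ?_
    by_cases hLE : L ⊆ E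
    · rw [Finset.inter_eq_left.2 hLE]
    · obtain ⟨e, he, heE⟩ := Finset.not_subset.1 hLE
      rw [edgeWeight_zero q L e he (Finset.mem_powerset.1 hL he) (h0 e heE)]
      simp
  rw [h2, key, key]
  refine Finset.sum_congr rfl fun L _ => ?_
  congr 1
  refine Finset.prod_congr rfl fun e he => ?_
  rw [h1 e he]

/-- In a fully separable network, the influence spread is 1-sub-additive in the
topic mixture. -/
theorem infSpread_one_subadditive {V : Type*} [Fintype V] [DecidableEq V] {d : ℕ}
    (parts : Fin d → Finset V)
    (hdisj : ∀ i j, i ≠ j → Disjoint (parts i) (parts j))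
    (hcover : ∀ x : V, ∃ i, x ∈ parts i)
    (pt : Fin d → V → V → ℝ)
    (hpt1 : ∀ i u v, 0 ≤ pt i u v ∧ pt i u v ≤ 1) (hpt2 : ∀ i v, pt i v v = 0)
    (hsep : ∀ i u v, pt i u v ≠ 0 → u ∈ parts i ∧ v ∈ parts i)
    (lam : Fin d → ℝ) (hlam : ∀ i, 0 ≤ lam i ∧ lam i ≤ 1) (hsum : ∑ i, lam i = 1)
    (p : V → V → ℝ) (hpdef : ∀ u w, p u w = ∑ j, lam j * pt j u w) :
    ∀ S : Finset V,
      infSpread S p ≤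
        ∑ i ∈ Finset.univ.filter (fun i => 0 < lam i),
          infSpread S (fun u w => lam i * pt i u w) := by
  intro S
  have hle : ∀ u w, 0 ≤ p u w ∧ p u w ≤ 1 := by
    intro u w
    rw [hpdef]
    refine ⟨Finset.sum_nonneg fun j _ => mul_nonneg (hlam j).1 (hpt1 j u w).1, ?_⟩
    rw [← hsum]
    exact Finset.sum_le_sum fun j _ => mul_le_of_le_one_right (hlam j).1 (hpt1 j u w).2
  have hw : ∀ L, 0 ≤ edgeWeight p L := by
    intro L
    refine Finset.prod_nonneg fun e _ => ?_
    have := hle e.1 e.2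
    split_ifs <;> linarith
  have hpos : ∃ i, 0 < lam i := by
    by_contra! h
    have : ∑ i, lam i ≤ 0 := Finset.sum_nonpos fun i _ => h i
    linarith
  have huniq : ∀ i j x, x ∈ parts i → x ∈ parts j → i = j := by
    intro i j x hi hj
    by_contra h
    exact Finset.disjoint_left.1 (hdisj i j h) hi hj
  have hmarg : ∀ i, infSpread S (fun u w => lam i * pt i u w) =
      ∑ L ∈ ((Finset.univ : Finset V).offDiag).powerset,
        edgeWeight p L * ((reachSet S (L ∩ (parts i).offDiag)).card : ℝ) := by
    intro i
    unfold infSpread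
    refine (marg p _ (parts i).offDiag (Finset.offDiag_mono (Finset.subset_univ _)) ?_ ?_
      (fun L => ((reachSet S L).card : ℝ))).symm
    · intro e he
      rw [hpdef]
      refine Finset.sum_eq_single i (fun j _ hj => ?_) (by simp)
      have : pt j e.1 e.2 = 0 := by
        by_contra h
        exact hj (huniq _ _ _ (hsep _ _ _ h).1 (Finset.mem_offDiag.1 he).1)
      rw [this, mul_zero]
    · intro e he
      have : pt i e.1 e.2 = 0 := by
        by_contra h
        refine he (Finset.mem_offDiag.2 ⟨(hsep _ _ _ h).1, (hsep _ _ _ h).2, fun h' => h ?_⟩)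
        rw [h']
        exact hpt2 _ _
      simp [this]
  rw [Finset.sum_congr rfl fun i _ => hmarg i, Finset.sum_comm]
  unfold infSpread
  refine Finset.sum_le_sum fun L hL => ?_
  rw [← Finset.mul_sum]
  by_cases hz : edgeWeight p L = 0
  · simp [hz]
  refine mul_le_mul_of_nonneg_left ?_ (hw L)
  have hedge : ∀ u v, (u, v) ∈ L → ∃ i, 0 < lam i ∧ (u, v) ∈ (parts i).offDiag := by
    intro u v huv
    have ho := Finset.mem_powerset.1 hL huv
    have hp : p u v ≠ 0 := fun h => hz (edgeWeight_zero p L (u, v) huv ho h)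
    rw [hpdef] at hp
    obtain ⟨j, _, hj⟩ := Finset.exists_ne_zero_of_sum_ne_zero hp
    have hs := hsep j u v (right_ne_zero_of_mul hj)
    exact ⟨j, lt_of_le_of_ne (hlam j).1 (left_ne_zero_of_mul hj).symm,
      Finset.mem_offDiag.2 ⟨hs.1, hs.2, (Finset.mem_offDiag.1 ho).2.2⟩⟩
  have hreach : ∀ s ∈ S, ∀ x, Relation.ReflTransGen (fun a b => (a, b) ∈ L) s x →
      x ∈ S ∨ ∃ i, 0 < lam i ∧ x ∈ parts i ∧ ∃ t ∈ S,
        Relation.ReflTransGen (fun a b => (a, b) ∈ L ∩ (parts i).offDiag) t x := by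
    intro s hs x hx
    induction hx with
    | refl => exact Or.inl hs
    | @tail b c _ hbc ih =>
      right
      obtain ⟨i, hi, he⟩ := hedge b c hbc
      have hm := Finset.mem_offDiag.1 he
      have hstep : (b, c) ∈ L ∩ (parts i).offDiag := Finset.mem_inter.2 ⟨hbc, he⟩
      refine ⟨i, hi, hm.2.1, ?_⟩
      rcases ih with hb | ⟨j, _, hbj, t, ht, hr⟩
      · exact ⟨b, hb, Relation.ReflTransGen.single hstep⟩
      · obtain rfl := huniq _ _ _ hbj hm.1
        exact ⟨t, ht, hr.tail hstep⟩
  have hsub : reachSet S L ⊆ (Finset.univ.filter (fun i => 0 < lam i)).biUnion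
      (fun i => reachSet S (L ∩ (parts i).offDiag)) := by
    intro x hx
    obtain ⟨s, hs, hr⟩ := (Finset.mem_filter.1 hx).2
    rw [Finset.mem_biUnion]
    rcases hreach s hs x hr with h | ⟨i, hi, _, t, ht, hr'⟩
    · obtain ⟨i, hi⟩ := hpos
      exact ⟨i, by simp [hi], Finset.mem_filter.2 ⟨Finset.mem_univ _, x, h, .refl⟩⟩
    · exact ⟨i, by simp [hi], Finset.mem_filter.2 ⟨Finset.mem_univ _, t, ht, hr'⟩⟩
  exact_mod_cast (Finset.card_le_card hsub).trans Finset.card_biUnion_le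
end

section
/- (Theorem 3.1, approximation guarantee of the Best Topic Selection algorithm.) Let p_1, …, p_d be influence probability functions on a finite vertex type V, let λ_1, …, λ_d ∈ [0,1] with Σ_i λ_i = 1, let D⁺ = {i : λ_i > 0}, and let p = Σ_i λ_i p_i (pointwise), which is an influence probability function. Fix k ∈ ℕ and constants c > 0, μ > 0. Suppose that for each i ∈ D⁺ we are given reals 0 ≤ λ̲_i ≤ λ_i ≤ λ̄_i ≤ 1 and sets T_i, S̄_i ⊆ V such that: (i) (greedy guarantee at the round-up landmark) for every U ⊆ V with |U| ≤ k, (1 − e⁻¹)·σ(U, λ̄_i p_i) ≤ σ(S̄_i, λ̄_i p_i); (ii) (landmark-gap bound) σ(S̄_i, λ̄_i p_i) ≤ μ·σ(T_i, λ̲_i p_i); (iii) (c-sub-additivity) for every U ⊆ V with |U| ≤ k, σ(U, p) ≤ c·Σ_{i ∈ D⁺} σ(U, λ_i p_i). Let i' ∈ D⁺ satisfy σ(T_{i'}, λ̲_{i'} p_{i'}) = max_{i ∈ D⁺} σ(T_i, λ̲_i p_i). Then for every S ⊆ V with |S| ≤ k, (1 − e⁻¹)·σ(S, p) ≤ c·|D⁺|·μ·σ(T_{i'},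 λ_{i'} p_{i'}). -/
open scoped Classical

theorem genSpread_mono {α : Type*} [DecidableEq α] (q q' : α → ℝ) (h0 : ∀ a, 0 ≤ q a)
    (hq : ∀ a, q a ≤ q' a) (h1 : ∀ a, q' a ≤ 1) (E : Finset α) :
    ∀ f : Finset α → ℝ, Monotone f →
    ∑ L ∈ E.powerset, (∏ e ∈ E, (if e ∈ L then q e else 1 - q e)) * f L ≤
    ∑ L ∈ E.powerset, (∏ e ∈ E, (if e ∈ L then q' e else 1 - q' e)) * f L := by
  have key : ∀ (r : α → ℝ) (a : α) (E : Finset α), a ∉ E → ∀ f : Finset α → ℝ,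
      ∑ L ∈ (insert a E).powerset, (∏ e ∈ insert a E, (if e ∈ L then r e else 1 - r e)) * f L =
      ∑ L ∈ E.powerset, (∏ e ∈ E, (if e ∈ L then r e else 1 - r e)) *
        ((1 - r a) * f L + r a * f (insert a L)) := by
    intro r a E ha f
    rw [Finset.sum_powerset_insert ha, ← Finset.sum_add_distrib]
    refine Finset.sum_congr rfl fun L hL => ?_
    have haL : a ∉ L := fun h => ha (Finset.mem_powerset.1 hL h)
    rw [Finset.prod_insert ha, Finset.prod_insert ha]
    have : ∏ e ∈ E, (if e ∈ insert a L then r e else 1 - r e) =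
        ∏ e ∈ E, (if e ∈ L then r e else 1 - r e) := by
      refine Finset.prod_congr rfl fun e he => ?_
      have : e ≠ a := fun h => ha (h ▸ he)
      simp [this]
    rw [this]
    simp only [haL, if_false, Finset.mem_insert_self, if_true]
    ring
  induction E using Finset.induction_on with
  | empty => intro f _; simp
  | insert a E ha ih =>
    intro f hf
    rw [key q a E ha, key q' a E ha]
    refine (ih (fun L => (1 - q a) * f L + q a * f (insert a L)) ?_).trans ?_
    · intro L L' hL
      have e1 := hf hL
      have e2 := hf (Finset.insert_subset_insert a hL)
      have := h0 a
      have : 0 ≤ 1 - q a := by linarith [hq a, h1 a]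
      dsimp only
      gcongr
    · refine Finset.sum_le_sum fun L _ => mul_le_mul_of_nonneg_left ?_ ?_
      · have e2 : f L ≤ f (insert a L) := hf (Finset.subset_insert a L)
        nlinarith [hq a]
      · refine Finset.prod_nonneg fun e _ => ?_
        split_ifs
        · exact (h0 e).trans (hq e)
        · linarith [h1 e]

theorem infSpread_mono {V : Type*} [Fintype V] [DecidableEq V] (S : Finset V)
    (p p' : V → V → ℝ) (h0 : ∀ u v, 0 ≤ p u v) (h : ∀ u v, p u v ≤ p' u v)
    (h1 : ∀ u v, p' u v ≤ 1) : infSpread S p ≤ infSpread S p' := by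
  unfold infSpread edgeWeight
  refine genSpread_mono (fun e : V × V => p e.1 e.2) (fun e => p' e.1 e.2)
    (fun e => h0 _ _) (fun e => h _ _) (fun e => h1 _ _) _
    (fun L => ((reachSet S L).card : ℝ)) ?_
  intro L L' hL
  refine Nat.cast_le.2 (Finset.card_le_card ?_)
  intro x hx
  simp only [reachSet, Finset.mem_filter, Finset.mem_univ, true_and] at hx ⊢
  obtain ⟨s, hs, hr⟩ := hx
  exact ⟨s, hs, Relation.ReflTransGen.mono (fun a b hab => hL hab) _ _ hr⟩

/-- Theorem 3.1: approximation guarantee of the Best Topic Selection algorithm. -/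
theorem BTS_approximation {V : Type*} [Fintype V] [DecidableEq V] {d : ℕ}
    (pt : Fin d → V → V → ℝ)
    (hpt1 : ∀ i u v, 0 ≤ pt i u v ∧ pt i u v ≤ 1) (hpt2 : ∀ i v, pt i v v = 0)
    (lam : Fin d → ℝ) (hlam : ∀ i, 0 ≤ lam i ∧ lam i ≤ 1) (hsum : ∑ i, lam i = 1)
    (Dplus : Finset (Fin d)) (hD : Dplus = Finset.univ.filter (fun i => 0 < lam i))
    (p : V → V → ℝ) (hpdef : ∀ u w, p u w = ∑ j, lam j * pt j u w)
    (k : ℕ) (c μ : ℝ) (hc : 0 < c) (hμ : 0 < μ)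
    (lamLo lamHi : Fin d → ℝ) (T Sbar : Fin d → Finset V)
    (hlo : ∀ i ∈ Dplus,
      0 ≤ lamLo i ∧ lamLo i ≤ lam i ∧ lam i ≤ lamHi i ∧ lamHi i ≤ 1)
    (hgreedy : ∀ i ∈ Dplus, ∀ U : Finset V, U.card ≤ k →
      (1 - Real.exp (-1)) * infSpread U (fun u w => lamHi i * pt i u w) ≤
        infSpread (Sbar i) (fun u w => lamHi i * pt i u w))
    (hgap : ∀ i ∈ Dplus,
      infSpread (Sbar i) (fun u w => lamHi i * pt i u w) ≤
        μ * infSpread (T i) (fun u w => lamLo i * pt i u w))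
    (hsub : ∀ U : Finset V, U.card ≤ k →
      infSpread U p ≤ c * ∑ i ∈ Dplus, infSpread U (fun u w => lam i * pt i u w))
    (i' : Fin d) (hi' : i' ∈ Dplus)
    (hmax : ∀ i ∈ Dplus,
      infSpread (T i) (fun u w => lamLo i * pt i u w) ≤
        infSpread (T i') (fun u w => lamLo i' * pt i' u w)) :
    ∀ S : Finset V, S.card ≤ k →
      (1 - Real.exp (-1)) * infSpread S p ≤
        c * Dplus.card * μ * infSpread (T i') (fun u w => lam i' * pt i' u w) := by
  intro S hS
  have he : 0 ≤ 1 - Real.exp (-1) := by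
    have : Real.exp (-1) ≤ 1 := Real.exp_le_one_iff.2 (by norm_num)
    linarith
  have mono : ∀ (U : Finset V) (i : Fin d) (a b : ℝ), 0 ≤ a → a ≤ b → b ≤ 1 →
      infSpread U (fun u w => a * pt i u w) ≤ infSpread U (fun u w => b * pt i u w) := by
    intro U i a b ha hab hb
    refine infSpread_mono U _ _ (fun u v => mul_nonneg ha (hpt1 i u v).1)
      (fun u v => mul_le_mul_of_nonneg_right hab (hpt1 i u v).1)
      (fun u v => mul_le_one₀ hb (hpt1 i u v).1 (hpt1 i u v).2)
  set M := infSpread (T i') (fun u w => lam i' * pt i' u w) with hM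
  have hb : ∀ i ∈ Dplus,
      (1 - Real.exp (-1)) * infSpread S (fun u w => lam i * pt i u w) ≤ μ * M := by
    intro i hi
    obtain ⟨_, _, h3, h4⟩ := hlo i hi
    obtain ⟨g1, g2, _, _⟩ := hlo i' hi'
    calc _ ≤ (1 - Real.exp (-1)) * infSpread S (fun u w => lamHi i * pt i u w) :=
          mul_le_mul_of_nonneg_left (mono S i _ _ (hlam i).1 h3 h4) he
      _ ≤ _ := hgreedy i hi S hS
      _ ≤ _ := hgap i hi
      _ ≤ μ * M := mul_le_mul_of_nonneg_left
          ((hmax i hi).trans (mono _ i' _ _ g1 g2 (hlam i').2)) hμ.le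
  calc (1 - Real.exp (-1)) * infSpread S p
      ≤ (1 - Real.exp (-1)) * (c * ∑ i ∈ Dplus, infSpread S (fun u w => lam i * pt i u w)) :=
        mul_le_mul_of_nonneg_left (hsub S hS) he
    _ = c * ∑ i ∈ Dplus, (1 - Real.exp (-1)) * infSpread S (fun u w => lam i * pt i u w) := by
        rw [← Finset.mul_sum]; ring
    _ ≤ c * ∑ i ∈ Dplus, μ * M :=
        mul_le_mul_of_nonneg_left (Finset.sum_le_sum hb) hc.le
    _ = c * Dplus.card * μ * M := by
        rw [Finset.sum_const, nsmul_eq_mul]; ring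
end

section
/- (Theorem 4.2, correctness of the Marginal Influence Sort algorithm on fully separable networks.) Let V_1, …, V_d be pairwise disjoint sets covering V and let p_1, …, p_d be fully separable topic influence probability functions with respect to this partition. Let λ_1, …, λ_d ∈ [0,1], D⁺ = {i : λ_i > 0} nonempty, p = Σ_j λ_j p_j (pointwise), and fix k ≥ 1. For each i ∈ D⁺, let (v^i_1, …, v^i_k) be a greedy sequence for λ_i p_i: the v^i_ℓ are distinct, v^i_ℓ ∈ V_i, and for every ℓ ≤ k and every u ∉ {v^i_1,…,v^i_{ℓ−1}}, MI(u | {v^i_1,…,v^i_{ℓ−1}}, λ_i p_i) ≤ MI(v^i_ℓ | {v^i_1,…,v^i_{ℓ−1}}, λ_i p_i). Define f(v^i_ℓ) = MI(v^i_ℓ | {v^i_1,…,v^i_{ℓ−1}}, λ_i p_i), and let C = {v^i_ℓ : i ∈ D⁺, 1 ≤ ℓ ≤ k} be the candidate set. Let w_1, …, w_k be k distinct elements of C such that: (sorted) f(w_1) ≥ f(w_2) ≥ … ≥ f(w_k), and f(u) ≤ f(w_k) for every u ∈ C \ {w_1,…,w_k}; (topic-order preserving) whenever v^i_ℓ = w_m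 and ℓ' < ℓ, the element v^i_{ℓ'} belongs to {w_1,…,w_{m−1}}. Then (w_1, …, w_k) is a greedy sequence for p: for every m ≤ k and every u ∈ V \ {w_1,…,w_{m−1}}, MI(u | {w_1,…,w_{m−1}}, p) ≤ MI(w_m | {w_1,…,w_{m−1}}, p). -/
open scoped Classical

/-- Weight of a live-edge set relative to an edge set `E`. -/
noncomputable def relWeight {V : Type*} [DecidableEq V]
    (p : V → V → ℝ) (E L : Finset (V × V)) : ℝ :=
  ∏ e ∈ E, (if e ∈ L then p e.1 e.2 else 1 - p e.1 e.2)

theorem relWeight_marg {V : Type*} [DecidableEq V]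
    (p : V → V → ℝ) (A : Finset (V × V)) (g : Finset (V × V) → ℝ) (B : Finset (V × V)) :
    Disjoint A B →
    ∑ L ∈ (B ∪ A).powerset, relWeight p (B ∪ A) L * g (L ∩ A) =
      ∑ L ∈ A.powerset, relWeight p A L * g L := by
  induction B using Finset.induction_on with
  | empty =>
    intro _
    rw [Finset.empty_union]
    refine Finset.sum_congr rfl fun L hL => ?_
    rw [Finset.inter_eq_left.2 (Finset.mem_powerset.1 hL)]
  | insert x B hx ih =>
    intro hd
    rw [Finset.disjoint_insert_right] at hd
    have hxn : x ∉ B ∪ A := by simp [hx, hd.1]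
    rw [← ih hd.2, Finset.insert_union, Finset.sum_powerset_insert hxn, ← Finset.sum_add_distrib]
    refine Finset.sum_congr rfl fun L hL => ?_
    have hxL : x ∉ L := fun h => hxn (Finset.mem_powerset.1 hL h)
    have h1 : relWeight p (insert x (B ∪ A)) L = (1 - p x.1 x.2) * relWeight p (B ∪ A) L := by
      unfold relWeight
      rw [Finset.prod_insert hxn, if_neg hxL]
    have h2 : relWeight p (insert x (B ∪ A)) (insert x L)
        = p x.1 x.2 * relWeight p (B ∪ A) L := by
      unfold relWeight
      rw [Finset.prod_insert hxn, if_pos (Finset.mem_insert_self _ _)]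
      congr 1
      refine Finset.prod_congr rfl fun e he => ?_
      have : e ≠ x := fun h => hxn (h ▸ he)
      simp [Finset.mem_insert, this]
    rw [h1, h2, Finset.insert_inter_of_notMem hd.1]
    ring

theorem reach_closed {V : Type*} [DecidableEq V] (A : Finset V) (L : Finset (V × V))
    (hL : ∀ a b, (a, b) ∈ L → (a ∈ A ↔ b ∈ A)) {a b : V}
    (h : Relation.ReflTransGen (fun a b => (a, b) ∈ L) a b) :
    (a ∈ A ↔ b ∈ A) ∧ (a ∈ A → Relation.ReflTransGen (fun a b => (a, b) ∈ L ∩ A.offDiag) a b) := by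
  induction h with
  | refl => exact ⟨Iff.rfl, fun _ => .refl⟩
  | @tail b c _ hbc ih =>
    refine ⟨ih.1.trans (hL _ _ hbc), fun ha => ?_⟩
    by_cases hne : b = c
    · exact hne ▸ ih.2 ha
    · refine (ih.2 ha).tail ?_
      have hb := ih.1.1 ha
      simp [hbc, hb, (hL _ _ hbc).1 hb, hne]

theorem reach_inter {V : Type*} [Fintype V] [DecidableEq V] (A : Finset V) (L : Finset (V × V))
    (hL : ∀ a b, (a, b) ∈ L → (a ∈ A ↔ b ∈ A)) (S : Finset V) :
    reachSet S L ∩ A = reachSet (S ∩ A) (L ∩ A.offDiag) := by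
  ext x
  simp only [reachSet, Finset.mem_inter, Finset.mem_filter, Finset.mem_univ, true_and]
  constructor
  · rintro ⟨⟨s, hs, h⟩, hx⟩
    have := reach_closed A L hL h
    exact ⟨s, ⟨hs, this.1.2 hx⟩, by simpa using this.2 (this.1.2 hx)⟩
  · rintro ⟨s, ⟨hs, hsA⟩, h⟩
    have h' : Relation.ReflTransGen (fun a b => (a, b) ∈ L) s x :=
      Relation.ReflTransGen.mono (fun a b hab => hab.1) s x h
    exact ⟨⟨s, hs, h'⟩, (reach_closed A L hL h').1.1 hsA⟩

theorem reach_diff {V : Type*} [Fintype V] [DecidableEq V] (A : Finset V) (L : Finset (V × V))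
    (hL : ∀ a b, (a, b) ∈ L → (a ∈ A ↔ b ∈ A)) (S : Finset V) (u : V) (hu : u ∈ A) :
    reachSet (insert u S) L \ A = reachSet S L \ A := by
  ext x
  simp only [reachSet, Finset.mem_sdiff, Finset.mem_filter, Finset.mem_univ, true_and]
  refine and_congr_left fun hx => ⟨?_, ?_⟩
  · rintro ⟨s, hs, h⟩
    rcases Finset.mem_insert.1 hs with rfl | hs
    · exact absurd ((reach_closed A L hL h).1.1 hu) hx
    · exact ⟨s, hs, h⟩
  · rintro ⟨s, hs, h⟩
    exact ⟨s, Finset.mem_insert_of_mem hs, h⟩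

theorem marginInf_local {V : Type*} [Fintype V] [DecidableEq V] (A : Finset V)
    (p : V → V → ℝ) (hp : ∀ a b, p a b ≠ 0 → (a ∈ A ↔ b ∈ A)) (S : Finset V) (u : V)
    (hu : u ∈ A) :
    marginInf u S p = ∑ L ∈ A.offDiag.powerset, relWeight p A.offDiag L *
      (((reachSet (insert u (S ∩ A)) L).card : ℝ) - (reachSet (S ∩ A) L).card) := by
  have hsub : A.offDiag ⊆ (Finset.univ : Finset V).offDiag := Finset.offDiag_mono (Finset.subset_univ _)
  rw [← relWeight_marg p A.offDiag (fun L =>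
      ((reachSet (insert u (S ∩ A)) L).card : ℝ) - (reachSet (S ∩ A) L).card)
      ((Finset.univ : Finset V).offDiag \ A.offDiag) Finset.disjoint_sdiff,
    Finset.sdiff_union_of_subset hsub]
  unfold marginInf infSpread
  rw [← Finset.sum_sub_distrib]
  refine Finset.sum_congr rfl fun L hL => ?_
  rw [← mul_sub]
  change relWeight p _ L * _ = _
  by_cases hw : relWeight p (Finset.univ : Finset V).offDiag L = 0
  · rw [hw, zero_mul, zero_mul]
  congr 1
  have hcl : ∀ a b, (a, b) ∈ L → (a ∈ A ↔ b ∈ A) := by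
    intro a b hab
    apply hp
    have := Finset.prod_ne_zero_iff.1 hw (a, b) (Finset.mem_powerset.1 hL hab)
    simpa [hab] using this
  have e1 := Finset.card_inter_add_card_sdiff (reachSet (insert u S) L) A
  have e2 := Finset.card_inter_add_card_sdiff (reachSet S L) A
  rw [reach_inter A L hcl, reach_diff A L hcl S u hu, Finset.insert_inter_of_mem hu] at e1
  rw [reach_inter A L hcl] at e2
  rw [← e1, ← e2]
  push_cast
  ring

theorem marginInf_congr {V : Type*} [Fintype V] [DecidableEq V] (A : Finset V)
    (p q : V → V → ℝ) (hp : ∀ a b, p a b ≠ 0 → (a ∈ A ↔ b ∈ A))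
    (hq : ∀ a b, q a b ≠ 0 → (a ∈ A ↔ b ∈ A))
    (hpq : ∀ a ∈ A, ∀ b ∈ A, p a b = q a b) (S T : Finset V) (hST : S ∩ A = T ∩ A) (u : V)
    (hu : u ∈ A) : marginInf u S p = marginInf u T q := by
  rw [marginInf_local A p hp S u hu, marginInf_local A q hq T u hu, hST]
  refine Finset.sum_congr rfl fun L _ => ?_
  congr 1
  refine Finset.prod_congr rfl fun e he => ?_
  rw [Finset.mem_offDiag] at he
  rw [hpq _ he.1 _ he.2.1]

/-- Theorem 4.2: correctness of the Marginal Influence Sort algorithm on fully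
separable networks: the sorted sequence of candidates is a greedy sequence for
the mixed influence probability function. -/
theorem MIS_correct {V : Type*} [Fintype V] [DecidableEq V] {d k : ℕ}
    (hk : 0 < k)
    (parts : Fin d → Finset V)
    (hdisj : ∀ i j, i ≠ j → Disjoint (parts i) (parts j))
    (hcover : ∀ x : V, ∃ i, x ∈ parts i)
    (pt : Fin d → V → V → ℝ)
    (hpt1 : ∀ i u v, 0 ≤ pt i u v ∧ pt i u v ≤ 1) (hpt2 : ∀ i v, pt i v v = 0)
    (hsep : ∀ i u v, pt i u v ≠ 0 → u ∈ parts i ∧ v ∈ parts i)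
    (lam : Fin d → ℝ) (hlam : ∀ i, 0 ≤ lam i ∧ lam i ≤ 1)
    (Dplus : Finset (Fin d)) (hD : Dplus = Finset.univ.filter (fun i => 0 < lam i))
    (hDne : Dplus.Nonempty)
    (p : V → V → ℝ) (hpdef : ∀ u w, p u w = ∑ j, lam j * pt j u w)
    -- greedy sequences for each topic in `Dplus`
    (v : Fin d → Fin k → V)
    (hvinj : ∀ i ∈ Dplus, Function.Injective (v i))
    (hvpart : ∀ i ∈ Dplus, ∀ ℓ : Fin k, v i ℓ ∈ parts i)
    (hgreedy : ∀ i ∈ Dplus, ∀ ℓ : Fin k, ∀ u : V,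
      u ∉ Finset.image (v i) (Finset.Iio ℓ) →
      marginInf u (Finset.image (v i) (Finset.Iio ℓ)) (fun a b => lam i * pt i a b) ≤
        marginInf (v i ℓ) (Finset.image (v i) (Finset.Iio ℓ)) (fun a b => lam i * pt i a b))
    -- the pre-computed marginal influences
    (f : V → ℝ)
    (hf : ∀ i ∈ Dplus, ∀ ℓ : Fin k,
      f (v i ℓ) =
        marginInf (v i ℓ) (Finset.image (v i) (Finset.Iio ℓ)) (fun a b => lam i * pt i a b))
    -- the candidate set
    (C : Finset V) (hC : C = Dplus.biUnion (fun i => Finset.image (v i) Finset.univ))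
    -- the output of MIS: k distinct candidates sorted by f
    (w : Fin k → V)
    (hwinj : Function.Injective w)
    (hwC : ∀ m : Fin k, w m ∈ C)
    (hsorted : ∀ m m' : Fin k, m ≤ m' → f (w m') ≤ f (w m))
    (hrest : ∀ u ∈ C, u ∉ Finset.image w Finset.univ → f u ≤ f (w ⟨k - 1, by omega⟩))
    (horder : ∀ i ∈ Dplus, ∀ ℓ ℓ' : Fin k, ∀ m : Fin k,
      v i ℓ = w m → ℓ' < ℓ → ∃ m' : Fin k, m' < m ∧ v i ℓ' = w m') :
    ∀ m : Fin k, ∀ u : V, u ∉ Finset.image w (Finset.Iio m) →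
      marginInf u (Finset.image w (Finset.Iio m)) p ≤
        marginInf (w m) (Finset.image w (Finset.Iio m)) p := by
  have huniq : ∀ i j x, x ∈ parts i → x ∈ parts j → i = j := by
    intro i j x hi hj
    by_contra h
    exact Finset.disjoint_left.1 (hdisj i j h) hi hj
  -- values of p
  have hpv : ∀ i a b, a ∈ parts i → p a b = lam i * pt i a b := by
    intro i a b ha
    rw [hpdef]
    refine Finset.sum_eq_single i (fun j _ hj => ?_) (fun h => absurd (Finset.mem_univ _) h)
    by_contra h
    exact hj (huniq _ _ _ (hsep j a b (right_ne_zero_of_mul h)).1 ha)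
  have hpcl : ∀ i a b, p a b ≠ 0 → (a ∈ parts i ↔ b ∈ parts i) := by
    intro i a b h
    obtain ⟨j, hj⟩ := hcover a
    rw [hpv j a b hj] at h
    have hb := (hsep j a b (right_ne_zero_of_mul h)).2
    constructor
    · intro ha; rwa [huniq i j a ha hj]
    · intro hb'; rwa [huniq i j b hb' hb]
  have hqcl : ∀ i a b, lam i * pt i a b ≠ 0 → (a ∈ parts i ↔ b ∈ parts i) := by
    intro i a b h
    have := hsep i a b (right_ne_zero_of_mul h)
    exact iff_of_true this.1 this.2
  have hkey : ∀ i (S T : Finset V) u, u ∈ parts i → S ∩ parts i = T ∩ parts i →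
      marginInf u S p = marginInf u T (fun a b => lam i * pt i a b) := by
    intro i S T u hu hST
    exact marginInf_congr (parts i) p _ (hpcl i) (hqcl i) (fun a ha b _ => hpv i a b ha) S T hST u hu
  have hCmem : ∀ i ∈ Dplus, ∀ ℓ, v i ℓ ∈ C := by
    intro i hi ℓ
    rw [hC]
    simp only [Finset.mem_biUnion, Finset.mem_image, Finset.mem_univ, true_and]
    exact ⟨i, hi, ℓ, rfl⟩
  have hCex : ∀ m, ∃ i ∈ Dplus, ∃ ℓ, v i ℓ = w m := by
    intro m
    have := hwC m
    rw [hC] at this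
    simpa only [Finset.mem_biUnion, Finset.mem_image, Finset.mem_univ, true_and] using this
  intro m u hu
  set S := Finset.image w (Finset.Iio m) with hS
  have hSmem : ∀ x, x ∈ S ↔ ∃ m' < m, w m' = x := by
    intro x; simp [hS]
  -- if `v i ℓ ∉ S` and all earlier ones are in `S`, then `S ∩ parts i` is the prefix
  have hpre : ∀ i ∈ Dplus, ∀ ℓ, v i ℓ ∉ S → (∀ ℓ' < ℓ, v i ℓ' ∈ S) →
      S ∩ parts i = Finset.image (v i) (Finset.Iio ℓ) ∩ parts i := by
    intro i hi ℓ hn hlt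
    ext x
    simp only [Finset.mem_inter, Finset.mem_image, Finset.mem_Iio]
    refine and_congr_left fun hx => ⟨fun hxS => ?_, ?_⟩
    · obtain ⟨m', hm', rfl⟩ := (hSmem x).1 hxS
      obtain ⟨j, hj, l, hl⟩ := hCex m'
      have : j = i := huniq _ _ _ (hvpart j hj l) (hl ▸ hx)
      subst this
      refine ⟨l, ?_, hl⟩
      by_contra hle
      rcases eq_or_lt_of_le (not_lt.1 hle) with h | h
      · exact hn (h ▸ hl ▸ hxS)
      · obtain ⟨m'', h1, h2⟩ := horder j hj l ℓ m' hl h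
        exact hn ((hSmem _).2 ⟨m'', h1.trans hm', h2.symm⟩)
    · rintro ⟨l, hl, rfl⟩
      exact hlt l hl
  have hwS : w m ∉ S := by
    intro h
    obtain ⟨m', h1, h2⟩ := (hSmem _).1 h
    exact h1.ne (hwinj h2)
  obtain ⟨j, hj, l, hl⟩ := hCex m
  have hjpre : S ∩ parts j = Finset.image (v j) (Finset.Iio l) ∩ parts j := by
    refine hpre j hj l (hl ▸ hwS) fun l' hl' => ?_
    obtain ⟨m', h1, h2⟩ := horder j hj l l' m hl hl'
    exact (hSmem _).2 ⟨m', h1, h2.symm⟩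
  have hfw : marginInf (w m) S p = f (w m) := by
    rw [← hl, hf j hj l]
    exact hkey j S _ _ (hvpart j hj l) hjpre
  rw [hfw]
  obtain ⟨i, hui⟩ := hcover u
  by_cases hi : i ∈ Dplus
  · have hex : ∃ ℓ, v i ℓ ∉ S := by
      by_contra hcon
      push Not at hcon
      have h1 : Finset.image (v i) Finset.univ ⊆ S := by
        intro x hx
        obtain ⟨ℓ, _, rfl⟩ := Finset.mem_image.1 hx
        exact hcon ℓ
      have h2 := Finset.card_le_card h1
      rw [Finset.card_image_of_injective _ (hvinj i hi), hS,
        Finset.card_image_of_injective _ hwinj, Fin.card_Iio] at h2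
      simp at h2
      omega
    obtain ⟨ℓ, hℓ, hmin⟩ := WellFounded.has_min (wellFounded_lt (α := Fin k))
      {ℓ | v i ℓ ∉ S} hex
    have hlt : ∀ ℓ' < ℓ, v i ℓ' ∈ S := by
      intro ℓ' h
      by_contra hn
      exact hmin ℓ' hn h
    have hip := hpre i hi ℓ hℓ hlt
    rw [hkey i S _ u hui hip]
    have hup : u ∉ Finset.image (v i) (Finset.Iio ℓ) := by
      intro h
      obtain ⟨l', h1, rfl⟩ := Finset.mem_image.1 h
      exact hu (hlt l' (Finset.mem_Iio.1 h1))
    refine (hgreedy i hi ℓ u hup).trans ?_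
    rw [← hf i hi ℓ]
    by_cases hin : v i ℓ ∈ Finset.image w Finset.univ
    · obtain ⟨m', _, hm'⟩ := Finset.mem_image.1 hin
      rw [← hm']
      refine hsorted m m' (not_lt.1 fun h => hℓ ((hSmem _).2 ⟨m', h, hm'⟩))
    · refine (hrest _ (hCmem i hi ℓ) hin).trans (hsorted _ _ ?_)
      rw [Fin.le_def]
      have := m.2
      simp only
      omega
  · have hlam0 : lam i = 0 := by
      rw [hD, Finset.mem_filter] at hi
      have h0 := (hlam i).1
      by_contra h
      exact hi ⟨Finset.mem_univ _, lt_of_le_of_ne h0 (Ne.symm h)⟩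
    have hij : i ≠ j := fun h => hi (h ▸ hj)
    have huj : u ∉ parts j := fun h => hij (huniq _ _ _ hui h)
    have hup : u ∉ Finset.image (v j) (Finset.Iio l) := by
      intro h
      obtain ⟨l', _, rfl⟩ := Finset.mem_image.1 h
      exact huj (hvpart j hj l')
    have hg := hgreedy j hj l u hup
    rw [← hf j hj l, hl] at hg
    refine le_trans (le_of_eq ?_) hg
    have hiso : ∀ a b, p a b ≠ 0 → a ∉ parts i := by
      intro a b h ha
      rw [hpv i a b ha, hlam0, zero_mul] at h
      exact h rfl
    have hau : ∀ a b, p a b ≠ 0 → a ≠ u ∧ b ≠ u := by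
      intro a b h
      have := hiso a b h
      refine ⟨fun e => this (e ▸ hui), fun e => this ((hpcl i a b h).2 (e ▸ hui))⟩
    refine marginInf_congr {u} p _ ?_ ?_ ?_ S _ ?_ u (Finset.mem_singleton_self u)
    · intro a b h
      simp [(hau a b h).1, (hau a b h).2]
    · intro a b h
      have := hsep j a b (right_ne_zero_of_mul h)
      have h1 : a ≠ u := fun e => huj (e ▸ this.1)
      have h2 : b ≠ u := fun e => huj (e ▸ this.2)
      simp [h1, h2]
    · intro a ha b hb
      rw [Finset.mem_singleton] at ha hb
      subst ha hb
      simp [hpv i _ _ hui, hlam0, hpt2]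
    · rw [Finset.inter_singleton_of_notMem hu, Finset.inter_singleton_of_notMem hup]
end
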